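/- Let n ≥ 1, c_u ∈ (0,1), C_u ∈ (1,∞), and let U ⊊ ℝⁿ be an unbounded (c_u,C_u)-uniform domain with nonempty boundary. Let h : closure(U) → ℝ be continuous, positive and harmonic on U, and identically 0 on ∂U. Then there exists a constant D ∈ (0,∞), depending only on n, c_u and C_u, such that for every x ∈ U and every r > 0, ∫_{B_U(x,2r)} h² dλ ≤ D · ∫_{B_U(x,r)} h² dλ, where λ is Lebesgue measure and B_U(x,r) = {y ∈ U : d_U(x,y) < r}. -/

import Mathlib

open Set Metric MeasureTheory ENNReal

noncomputable section

abbrev En (n : ℕ) := EuclideanSpace ℝ (Fin n)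

/-- The length of the curve `γ : [0,1] → X`, defined as the supremum of sums
`∑ d(γ(t_i), γ(t_{i-1}))` over partitions `0 ≤ t₀ < … < t_k ≤ 1`. -/
def curveLength {X : Type*} [PseudoEMetricSpace X] (γ : ℝ → X) : ℝ≥0∞ :=
  eVariationOn γ (Set.Icc 0 1)

/-- `γ` is a continuous curve in `Ω` from `x` to `y`. -/
def IsCurveIn {X : Type*} [PseudoEMetricSpace X] (Ω : Set X) (x y : X) (γ : ℝ → X) : Prop :=
  ContinuousOn γ (Set.Icc 0 1) ∧ Set.MapsTo γ (Set.Icc 0 1) Ω ∧ γ 0 = x ∧ γ 1 = y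

/-- The inner (pseudo)metric of `Ω`: the infimum of lengths of continuous curves
joining `x` to `y` inside `Ω`. -/
def innerDist {X : Type*} [PseudoEMetricSpace X] (Ω : Set X) (x y : X) : ℝ≥0∞ :=
  ⨅ (γ : ℝ → X) (_ : IsCurveIn Ω x y γ), curveLength γ

/-- `U` is a `(c,C)`-uniform domain in `ℝⁿ`. -/
def IsUniformDomain {n : ℕ} (c C : ℝ) (U : Set (En n)) : Prop :=
  IsOpen U ∧ IsConnected U ∧
    ∀ x ∈ U, ∀ y ∈ U, ∃ γ : ℝ → En n, IsCurveIn U x y γ ∧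
      curveLength γ ≤ ENNReal.ofReal (C * dist x y) ∧
      ∀ t ∈ Set.Icc (0:ℝ) 1,
        c * min (dist x (γ t)) (dist (γ t) y) ≤ Metric.infDist (γ t) (frontier U)

/-- The Laplacian `∑ ∂²f/∂xᵢ²` of `f : ℝⁿ → ℝ`. -/
def lap {n : ℕ} (f : En n → ℝ) (x : En n) : ℝ :=
  ∑ i : Fin n,
    fderiv ℝ (fun y => fderiv ℝ f y (EuclideanSpace.single i 1)) x (EuclideanSpace.single i 1)

/-- `f` is harmonic on the open set `V`: twice continuously differentiable with
vanishing Laplacian. -/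
def IsHarmonicOn {n : ℕ} (f : En n → ℝ) (V : Set (En n)) : Prop :=
  ContDiffOn ℝ 2 f V ∧ ∀ x ∈ V, lap f x = 0

/-!
Averages against the kernel `(1 - ‖w‖²)₊` play the role of spherical means: they reproduce harmonic
functions, dominate subharmonic ones, and give the Harnack inequality by comparing two overlapping
balls. Let `z` be a corkscrew point of `U` at scale `r` near `x`, that is, a point of `U` whose
distance to the boundary is comparable to `r`. Harnack chains along uniform curves, run through
corkscrew points at the scales `r / 2 ^ k`, bound the profile `h` by `h z` times a power of the
ratio of `r` to the distance to the boundary.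

This polynomial bound is improved to a uniform one, `h ≤ B * h z` on `U ∩ ball x (2 * r)`, by an
argument of Domar. Extended by zero, `h ^ 3` is subharmonic on the whole space. Its product with a
high power of `4 * r - dist y x` attains a maximum, and near a maximum point `y` the function
barely exceeds its value there; but the corkscrew point of `y` at a small scale carries a ball on
which the polynomial bound applies, so a large maximum would violate the submean inequality.

Inner balls lie in Euclidean balls and contain a Euclidean ball of comparable radius around `z`, on
which `h` is comparable to `h z`. Hence both integrals of `h ^ p` are comparable to
`(h z) ^ p * r ^ n`.
-/

open Filter Topology InnerProductSpace Laplacian Module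

section TruncatedPower

lemma hasDerivAt_max_zero_pow (k : ℕ) (t : ℝ) :
    HasDerivAt (fun t : ℝ ↦ max t 0 ^ (k + 2)) (((k : ℝ) + 2) * max t 0 ^ (k + 1)) t := by
  rcases lt_trichotomy t 0 with ht | rfl | ht
  · have hzero : (fun t : ℝ ↦ max t 0 ^ (k + 2)) =ᶠ[𝓝 t] fun _ ↦ 0 := by
      filter_upwards [Iio_mem_nhds ht] with s hs
      rw [max_eq_right (mem_Iio.1 hs).le, zero_pow (by omega)]
    simpa [max_eq_right ht.le] using (hasDerivAt_const t (0 : ℝ)).congr_of_eventuallyEq hzero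
  · have hle : (fun t : ℝ ↦ max t 0 ^ (k + 2)) =O[𝓝 0] fun t : ℝ ↦ t ^ (k + 2) := by
      refine Asymptotics.isBigO_of_le _ fun s ↦ ?_
      rw [norm_pow, norm_pow, Real.norm_of_nonneg (le_max_right _ _)]
      exact pow_le_pow_left₀ (le_max_right _ _) (max_le (le_abs_self s) (abs_nonneg s)) _
    have hlittle := hle.trans_isLittleO
      (Asymptotics.isLittleO_pow_pow (𝕜 := ℝ) (m := 1) (n := k + 2) (by omega))
    simpa [hasDerivAt_iff_isLittleO] using hlittle
  · have hpow : (fun t : ℝ ↦ max t 0 ^ (k + 2)) =ᶠ[𝓝 t] fun t ↦ t ^ (k + 2) := by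
      filter_upwards [Ioi_mem_nhds ht] with s hs
      rw [max_eq_left (mem_Ioi.1 hs).le]
    simpa [max_eq_left ht.le] using (hasDerivAt_pow (k + 2) t).congr_of_eventuallyEq hpow

lemma deriv_max_zero_pow (k : ℕ) :
    deriv (fun t : ℝ ↦ max t 0 ^ (k + 2)) = fun t : ℝ ↦ ((k : ℝ) + 2) * max t 0 ^ (k + 1) :=
  funext fun t ↦ (hasDerivAt_max_zero_pow k t).deriv

lemma contDiff_max_zero_pow (k : ℕ) : ContDiff ℝ k fun t : ℝ ↦ max t 0 ^ (k + 1) := by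
  induction k with
  | zero => exact contDiff_zero.2 (by fun_prop)
  | succ k ih =>
    push_cast
    rw [contDiff_succ_iff_deriv]
    refine ⟨fun t ↦ (hasDerivAt_max_zero_pow k t).differentiableAt, by simp, ?_⟩
    rw [deriv_max_zero_pow]
    exact contDiff_const.mul ih

end TruncatedPower

section Laplacian

variable {E : Type*} [NormedAddCommGroup E] [InnerProductSpace ℝ E] [FiniteDimensional ℝ E]
  {ι : Type*} [Fintype ι]

lemma laplacian_eq_sum_fderiv_fderiv {f : E → ℝ} {x : E} (hf : ContDiffAt ℝ 2 f x)
    (v : OrthonormalBasis ι ℝ E) :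
    (Δ f) x = ∑ i, fderiv ℝ (fun y ↦ fderiv ℝ f y (v i)) x (v i) := by
  have hdiff : DifferentiableAt ℝ (fderiv ℝ f) x :=
    (hf.fderiv_right (m := 1) (by norm_num)).differentiableAt (by norm_num)
  simp only [laplacian_eq_iteratedFDeriv_orthonormalBasis f v, iteratedFDeriv_two_apply]
  refine Finset.sum_congr rfl fun i _ ↦ ?_
  simp [fderiv_clm_apply hdiff (differentiableAt_const (v i))]

lemma laplacian_comp_eq {φ : ℝ → ℝ} {f : E → ℝ} {x : E} (hφ : ContDiff ℝ 2 φ)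
    (hf : ContDiffAt ℝ 2 f x) (v : OrthonormalBasis ι ℝ E) :
    (Δ (φ ∘ f)) x =
      deriv (deriv φ) (f x) * ∑ i, fderiv ℝ f x (v i) ^ 2 + deriv φ (f x) * (Δ f) x := by
  have hφ' : Differentiable ℝ (deriv φ) :=
    ((contDiff_succ_iff_deriv (n := 1)).1 hφ).2.2.differentiable (by norm_num)
  have hdiff : ∀ᶠ y in 𝓝 x, DifferentiableAt ℝ f y :=
    (hf.eventually (by simp)).mono fun y hy ↦ hy.differentiableAt (by norm_num)
  have hfirst (i : ι) : (fun y ↦ fderiv ℝ (φ ∘ f) y (v i)) =ᶠ[𝓝 x]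
      fun y ↦ deriv φ (f y) * fderiv ℝ f y (v i) := by
    filter_upwards [hdiff] with y hy
    rw [((hφ.differentiable (by norm_num) (f y)).hasDerivAt.comp_hasFDerivAt y
      hy.hasFDerivAt).fderiv]
    rfl
  have hsecond (i : ι) : fderiv ℝ (fun y ↦ fderiv ℝ (φ ∘ f) y (v i)) x (v i) =
      deriv (deriv φ) (f x) * fderiv ℝ f x (v i) ^ 2 +
        deriv φ (f x) * fderiv ℝ (fun y ↦ fderiv ℝ f y (v i)) x (v i) := by
    have houter : HasFDerivAt (fun y ↦ deriv φ (f y)) (deriv (deriv φ) (f x) • fderiv ℝ f x) x :=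
      (hφ' (f x)).hasDerivAt.comp_hasFDerivAt x hdiff.self_of_nhds.hasFDerivAt
    have hinner : DifferentiableAt ℝ (fun y ↦ fderiv ℝ f y (v i)) x :=
      ((hf.fderiv_right (m := 1) (by norm_num)).differentiableAt (by norm_num)).clm_apply
        (differentiableAt_const _)
    rw [(hfirst i).fderiv_eq, (houter.fun_mul hinner.hasFDerivAt).fderiv]
    simp only [add_apply, smul_apply, smul_eq_mul]
    ring
  rw [laplacian_eq_sum_fderiv_fderiv (hφ.contDiffAt.comp x hf) v,
    laplacian_eq_sum_fderiv_fderiv hf v]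
  simp only [hsecond, Finset.sum_add_distrib, Finset.mul_sum]

lemma lap_eq_laplacian {n : ℕ} {f : En n → ℝ} {x : En n} (hf : ContDiffAt ℝ 2 f x) :
    lap f x = (Δ f) x := by
  rw [laplacian_eq_sum_fderiv_fderiv hf (EuclideanSpace.basisFun (Fin n) ℝ)]
  simp only [EuclideanSpace.basisFun_apply]
  rfl

lemma IsHarmonicOn.harmonicOnNhd {n : ℕ} {h : En n → ℝ} {U : Set (En n)}
    (hh : IsHarmonicOn h U) (hU : IsOpen U) : HarmonicOnNhd h U := by
  have hC2 : ∀ y ∈ U, ContDiffAt ℝ 2 h y := fun y hy ↦ hh.1.contDiffAt (hU.mem_nhds hy)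
  refine fun x hx ↦ ⟨hC2 x hx, ?_⟩
  filter_upwards [hU.mem_nhds hx] with y hy
  rw [← lap_eq_laplacian (hC2 y hy), hh.2 y hy]
  rfl

end Laplacian

section BallKernel

variable {E : Type*} [NormedAddCommGroup E]

/-- The radial weight `(1 - ‖w‖²)₊`. Averaging against it serves as a mean value formula: since
`∇(κ²) = -4 κ w`, an integration by parts turns radial derivatives into Laplacians, without any
surface measure. -/
def ballKernel (w : E) : ℝ := max (1 - ‖w‖ ^ 2) 0

lemma ballKernel_nonneg (w : E) : 0 ≤ ballKernel w := le_max_right _ _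

lemma ballKernel_le_one (w : E) : ballKernel w ≤ 1 :=
  max_le (sub_le_self _ (by positivity)) zero_le_one

lemma ballKernel_eq_zero {w : E} (hw : 1 ≤ ‖w‖) : ballKernel w = 0 :=
  max_eq_right (by nlinarith)

lemma ballKernel_eq_zero_of_notMem {w : E} (hw : w ∉ closedBall 0 1) : ballKernel w = 0 :=
  ballKernel_eq_zero (not_le.1 (mt mem_closedBall_zero_iff.2 hw)).le

lemma one_sub_sq_le_ballKernel {a : ℝ} {w : E} (hw : ‖w‖ ≤ a) : 1 - a ^ 2 ≤ ballKernel w :=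
  le_max_of_le_left (by gcongr)

@[fun_prop]
lemma continuous_ballKernel : Continuous (ballKernel : E → ℝ) := by
  unfold ballKernel; fun_prop

lemma tsupport_ballKernel_sq_subset : tsupport (fun w : E ↦ ballKernel w ^ 2) ⊆ closedBall 0 1 :=
  closure_minimal (fun _ hw ↦ not_imp_comm.1 ballKernel_eq_zero_of_notMem
    (ne_zero_pow two_ne_zero hw)) isClosed_closedBall

variable [InnerProductSpace ℝ E]

lemma mapsTo_add_smul_closedBall (x : E) (r : ℝ) :
    MapsTo (fun w ↦ x + r • w) (closedBall 0 1) (closedBall x |r|) := fun w hw ↦ by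
  simpa [norm_smul] using mul_le_of_le_one_right (abs_nonneg r) (mem_closedBall_zero_iff.1 hw)

lemma continuousOn_comp_add_smul {f : E → ℝ} {x : E} {r : ℝ}
    (hf : ContinuousOn f (closedBall x |r|)) :
    ContinuousOn (fun w ↦ f (x + r • w)) (closedBall 0 1) :=
  hf.comp (by fun_prop) (mapsTo_add_smul_closedBall x r)

lemma hasFDerivAt_ballKernel_sq (w : E) :
    HasFDerivAt (fun w : E ↦ ballKernel w ^ 2) (-(4 * ballKernel w) • innerSL ℝ w) w := by
  have hinner : HasFDerivAt (fun w : E ↦ 1 - ‖w‖ ^ 2) (-(2 • innerSL ℝ w)) w :=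
    (hasStrictFDerivAt_norm_sq w).hasFDerivAt.const_sub 1
  refine ((hasDerivAt_max_zero_pow 0 (1 - ‖w‖ ^ 2)).comp_hasFDerivAt w hinner).congr_fderiv ?_
  ext v
  simp only [ballKernel, smul_apply, neg_apply, smul_eq_mul, nsmul_eq_mul]
  push_cast
  ring

lemma add_smul_mem_ball_iff {x z w : E} {r δ : ℝ} (hr : 0 < r) :
    x + r • w ∈ ball z (δ * r) ↔ w ∈ ball (r⁻¹ • (z - x)) δ := by
  have hsmul : x + r • w - z = r • (w - r⁻¹ • (z - x)) := by
    rw [smul_sub, smul_inv_smul₀ hr.ne']; abel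
  rw [mem_ball_iff_norm, mem_ball_iff_norm, hsmul, norm_smul, Real.norm_of_nonneg hr.le,
    mul_comm r, mul_lt_mul_iff_left₀ hr]

lemma ballKernel_inv_smul_sub_eq_zero {x y : E} {r : ℝ} (hr : 0 < r) (hy : r ≤ dist y x) :
    ballKernel (r⁻¹ • (y - x)) = 0 := by
  refine ballKernel_eq_zero ?_
  rwa [norm_smul, ← dist_eq_norm, norm_inv, Real.norm_of_nonneg hr.le, ← div_eq_inv_mul,
    one_le_div₀ hr]

lemma ballKernel_le_two_mul_ballKernel {a b y : E} {r : ℝ} (hr : 0 < r) (hab : dist a b ≤ r) :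
    ballKernel (r⁻¹ • (y - a)) ≤ 2 * ballKernel ((3 * r)⁻¹ • (y - b)) := by
  rcases le_or_gt r (dist y a) with hy | hy
  · rw [ballKernel_inv_smul_sub_eq_zero hr hy]
    exact mul_nonneg zero_le_two (ballKernel_nonneg _)
  · have hnorm : ‖(3 * r)⁻¹ • (y - b)‖ ≤ 2 / 3 := by
      rw [norm_smul, ← dist_eq_norm, norm_inv, Real.norm_of_nonneg (by positivity),
        inv_mul_le_iff₀ (by positivity)]
      linarith [dist_triangle y a b]
    linarith [ballKernel_le_one (r⁻¹ • (y - a)), one_sub_sq_le_ballKernel hnorm]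

variable [FiniteDimensional ℝ E] [MeasurableSpace E] [BorelSpace E]

lemma integrable_of_continuousOn_closedBall {g : E → ℝ} {x : E} {r : ℝ}
    (hg : ContinuousOn g (closedBall x r)) (hzero : ∀ y ∉ closedBall x r, g y = 0) :
    Integrable g :=
  (integrableOn_iff_integrable_of_support_subset fun y hy ↦ not_imp_comm.1 (hzero y) hy).1
    (hg.integrableOn_compact (isCompact_closedBall x r))

lemma integrable_mul_ballKernel_pow {g : E → ℝ} (hg : ContinuousOn g (closedBall 0 1)) {k : ℕ}
    (hk : k ≠ 0) : Integrable fun w ↦ g w * ballKernel w ^ k := by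
  refine integrable_of_continuousOn_closedBall (x := 0) (r := 1) (by fun_prop) fun w hw ↦ ?_
  rw [ballKernel_eq_zero_of_notMem hw, zero_pow hk, mul_zero]

lemma integrable_mul_ballKernel {g : E → ℝ} (hg : ContinuousOn g (closedBall 0 1)) :
    Integrable fun w ↦ g w * ballKernel w := by
  simpa using integrable_mul_ballKernel_pow hg one_ne_zero

lemma integrable_ballKernel : Integrable (ballKernel : E → ℝ) := by
  simpa using integrable_mul_ballKernel (E := E) (g := fun _ ↦ 1) continuousOn_const

lemma integral_ballKernel_pos : 0 < ∫ w : E, ballKernel w := by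
  refine continuous_ballKernel.integral_pos_of_hasCompactSupport_nonneg_nonzero
    (x := 0) ?_ ballKernel_nonneg (by simp [ballKernel])
  exact HasCompactSupport.intro (isCompact_closedBall 0 1) fun w ↦ ballKernel_eq_zero_of_notMem

/-- The average of `f` over the ball of centre `x` and radius `r`, weighted by `ballKernel`. -/
def kernelMean (f : E → ℝ) (x : E) (r : ℝ) : ℝ :=
  (∫ w : E, ballKernel w)⁻¹ * ∫ w, f (x + r • w) * ballKernel w

lemma kernelMean_zero (f : E → ℝ) (x : E) : kernelMean f x 0 = f x := by
  simp only [kernelMean, zero_smul, add_zero, integral_const_mul]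
  field_simp [(integral_ballKernel_pos (E := E)).ne']

lemma kernelMean_neg (f : E → ℝ) (x : E) (r : ℝ) : kernelMean (-f) x r = -kernelMean f x r := by
  simp [kernelMean, integral_neg]

lemma integrable_comp_add_smul_mul_ballKernel {f : E → ℝ} {x : E} {r : ℝ}
    (hf : ContinuousOn f (closedBall x |r|)) : Integrable fun w ↦ f (x + r • w) * ballKernel w :=
  integrable_mul_ballKernel (continuousOn_comp_add_smul hf)

lemma integral_mul_inner_mul_ballKernel {g : E → ℝ}
    (hg : ∀ w ∈ closedBall (0 : E) 1, ContDiffAt ℝ 1 g w) (v : E) :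
    4 * ∫ w, g w * inner ℝ w v * ballKernel w = ∫ w, fderiv ℝ g w v * ballKernel w ^ 2 := by
  have hcont : ContinuousOn g (closedBall 0 1) := fun w hw ↦
    (hg w hw).continuousAt.continuousWithinAt
  have hcont' : ContinuousOn (fun w ↦ fderiv ℝ g w v) (closedBall 0 1) := fun w hw ↦
    (((hg w hw).fderiv_right (m := 0) (by norm_num)).continuousAt.clm_apply
      continuousAt_const).continuousWithinAt
  have hkernel (w : E) : fderiv ℝ (fun w ↦ ballKernel w ^ 2) w v =
      -4 * (inner ℝ w v * ballKernel w) := by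
    rw [(hasFDerivAt_ballKernel_sq w).fderiv]
    simp only [smul_apply, innerSL_apply_apply, smul_eq_mul]
    ring
  have hparts := integral_mul_fderiv_eq_neg_fderiv_mul_of_integrable
    (μ := (volume : Measure E)) (f := g) (g := fun w ↦ ballKernel w ^ 2) (v := v)
    (integrable_mul_ballKernel_pow hcont' two_ne_zero)
    (by
      simp only [hkernel, mul_left_comm _ (-4 : ℝ), ← mul_assoc (g _)]
      exact (integrable_mul_ballKernel (hcont.mul (by fun_prop))).const_mul _)
    (integrable_mul_ballKernel_pow hcont two_ne_zero)
    (fun w hw ↦ (hg w (tsupport_ballKernel_sq_subset hw)).differentiableAt one_ne_zero)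
    (fun w _ ↦ (hasFDerivAt_ballKernel_sq w).differentiableAt)
  simp only [hkernel, mul_left_comm _ (-4 : ℝ), ← mul_assoc (g _), integral_const_mul] at hparts
  linarith

lemma integral_comp_add_smul_mul_inner_mul_ballKernel {g : E → ℝ} {x : E} {s : ℝ}
    (hg : ∀ y ∈ closedBall x |s|, ContDiffAt ℝ 1 g y) (v : E) :
    4 * ∫ w, g (x + s • w) * inner ℝ w v * ballKernel w =
      s * ∫ w, fderiv ℝ g (x + s • w) v * ballKernel w ^ 2 := by
  have hmem : MapsTo (fun w ↦ x + s • w) (closedBall 0 1) (closedBall x |s|) :=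
    mapsTo_add_smul_closedBall x s
  have hderiv (w : E) : HasFDerivAt (fun w ↦ x + s • w) (s • ContinuousLinearMap.id ℝ E) w :=
    ((hasFDerivAt_id w).const_smul s).const_add x
  have hsmooth (w) (hw : w ∈ closedBall (0 : E) 1) : ContDiffAt ℝ 1 (fun w ↦ g (x + s • w)) w :=
    (hg _ (hmem hw)).comp w (contDiffAt_const.add (contDiffAt_id.const_smul s))
  rw [integral_mul_inner_mul_ballKernel hsmooth v, ← integral_const_mul]
  refine integral_congr_ae (.of_forall fun w ↦ ?_)
  by_cases hw : w ∈ closedBall 0 1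
  · have hdiff := ((hg _ (hmem hw)).differentiableAt one_ne_zero).hasFDerivAt
    simp only [show fderiv ℝ (fun w ↦ g (x + s • w)) w = _ from
      (hdiff.comp w (hderiv w)).fderiv, ContinuousLinearMap.comp_apply, smul_apply,
      ContinuousLinearMap.id_apply, map_smul, smul_eq_mul, mul_assoc]
  · simp [ballKernel_eq_zero_of_notMem hw]

lemma integral_fderiv_mul_ballKernel {f : E → ℝ} {x : E} {s : ℝ}
    (hf : ∀ y ∈ closedBall x |s|, ContDiffAt ℝ 2 f y) :
    4 * ∫ w, fderiv ℝ f (x + s • w) w * ballKernel w =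
      s * ∫ w, (Δ f) (x + s • w) * ballKernel w ^ 2 := by
  let v := stdOrthonormalBasis ℝ E
  let dir (i : Fin (finrank ℝ E)) (y : E) : ℝ := fderiv ℝ f y (v i)
  have hdir (i) (y) (hy : y ∈ closedBall x |s|) : ContDiffAt ℝ 1 (dir i) y :=
    ((hf y hy).fderiv_right (by norm_num)).clm_apply contDiffAt_const
  have hcont (i) : ContinuousOn (dir i) (closedBall x |s|) :=
    fun y hy ↦ (hdir i y hy).continuousAt.continuousWithinAt
  have hcont' (i) : ContinuousOn (fun y ↦ fderiv ℝ (dir i) y (v i)) (closedBall x |s|) :=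
    fun y hy ↦ ((((hdir i y hy).fderiv_right (m := 0) (by norm_num)).continuousAt).clm_apply
      continuousAt_const).continuousWithinAt
  calc 4 * ∫ w, fderiv ℝ f (x + s • w) w * ballKernel w
      = 4 * ∫ w, ∑ i, dir i (x + s • w) * inner ℝ w (v i) * ballKernel w := by
        congr with w
        nth_rw 2 [← v.sum_repr' w]
        simp only [map_sum, map_smul, smul_eq_mul, Finset.sum_mul, real_inner_comm w, dir,
          mul_comm (inner ℝ w _)]
    _ = ∑ i, s * ∫ w, fderiv ℝ (dir i) (x + s • w) (v i) * ballKernel w ^ 2 := by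
        rw [integral_finsetSum _ fun i _ ↦ integrable_mul_ballKernel
          ((continuousOn_comp_add_smul (hcont i)).fun_mul (by fun_prop)), Finset.mul_sum]
        exact Finset.sum_congr rfl fun i _ ↦
          integral_comp_add_smul_mul_inner_mul_ballKernel (hdir i) (v i)
    _ = _ := by
        rw [← Finset.mul_sum, ← integral_finsetSum _ fun i _ ↦
          integrable_mul_ballKernel_pow (continuousOn_comp_add_smul (hcont' i)) two_ne_zero]
        congr with w
        by_cases hw : w ∈ closedBall 0 1
        · rw [laplacian_eq_sum_fderiv_fderiv (hf _ (mapsTo_add_smul_closedBall x s hw)) v,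
            Finset.sum_mul]
        · simp [ballKernel_eq_zero_of_notMem hw]

lemma hasDerivAt_integral_comp_add_smul_mul_ballKernel {f : E → ℝ} {x : E} {s R : ℝ}
    (hf : ∀ y ∈ ball x R, ContDiffAt ℝ 1 f y) (hs : |s| < R) :
    HasDerivAt (fun s ↦ ∫ w, f (x + s • w) * ballKernel w)
      (∫ w, fderiv ℝ f (x + s • w) w * ballKernel w) s := by
  obtain ⟨r, hsr, hrR⟩ := exists_between hs
  have hsub : closedBall x r ⊆ ball x R := closedBall_subset_ball hrR
  have hf' : ContinuousOn (fderiv ℝ f) (closedBall x r) := fun y hy ↦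
    (((hf y (hsub hy)).fderiv_right (m := 0) (by norm_num)).continuousAt).continuousWithinAt
  obtain ⟨M, hM⟩ := (isCompact_closedBall x r).exists_bound_of_continuousOn hf'
  have hmaps {t : ℝ} (ht : |t| < r) :
      MapsTo (fun w ↦ x + t • w) (closedBall 0 1) (closedBall x r) :=
    (mapsTo_add_smul_closedBall x t).mono_right (closedBall_subset_closedBall ht.le)
  have hint {t : ℝ} (ht : |t| < r) : Integrable fun w ↦ f (x + t • w) * ballKernel w :=
    integrable_comp_add_smul_mul_ballKernel fun y hy ↦ (hf y (hsub
      (closedBall_subset_closedBall ht.le hy))).continuousAt.continuousWithinAt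
  refine (hasDerivAt_integral_of_dominated_loc_of_deriv_le (s := {t | |t| < r})
    (bound := fun w ↦ M * ballKernel w) (F' := fun t w ↦ fderiv ℝ f (x + t • w) w * ballKernel w)
    (continuous_abs.tendsto s |>.eventually_lt_const hsr) ?_ (hint hsr) ?_
    (.of_forall fun w t ht ↦ ?_) (integrable_ballKernel.const_mul M)
    (.of_forall fun w t ht ↦ ?_)).2
  · filter_upwards [continuous_abs.tendsto s |>.eventually_lt_const hsr] with t ht
    exact (hint ht).aestronglyMeasurable
  · exact (integrable_mul_ballKernel ((hf'.comp (by fun_prop) (hmaps hsr)).clm_apply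
      continuousOn_id)).aestronglyMeasurable
  · rw [norm_mul, Real.norm_of_nonneg (ballKernel_nonneg w)]
    by_cases hw : ‖w‖ ≤ 1
    · gcongr
      · exact ballKernel_nonneg w
      · exact ((fderiv ℝ f (x + t • w)).le_of_opNorm_le_of_le
          (hM _ (hmaps ht (by simpa using hw))) hw).trans (mul_one M).le
    · simp [ballKernel_eq_zero (not_le.1 hw).le]
  · by_cases hw : ‖w‖ ≤ 1
    · have hline : HasDerivAt (fun t : ℝ ↦ x + t • w) w t := by
        simpa using ((hasDerivAt_id t).smul_const w).const_add x
      exact ((((hf _ (hsub (hmaps ht (by simpa using hw)))).differentiableAt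
        one_ne_zero).hasFDerivAt.comp_hasDerivAt t hline).mul_const _)
    · simpa [ballKernel_eq_zero (not_le.1 hw).le] using hasDerivAt_const t (0 : ℝ)

lemma hasDerivAt_kernelMean {f : E → ℝ} {x : E} {s R : ℝ}
    (hf : ∀ y ∈ ball x R, ContDiffAt ℝ 2 f y) (hs : |s| < R) :
    HasDerivAt (kernelMean f x)
      ((∫ w : E, ballKernel w)⁻¹ * (s / 4 * ∫ w, (Δ f) (x + s • w) * ballKernel w ^ 2)) s := by
  have hparts := integral_fderiv_mul_ballKernel fun y hy ↦ hf y (closedBall_subset_ball hs hy)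
  refine ((hasDerivAt_integral_comp_add_smul_mul_ballKernel
    (fun y hy ↦ (hf y hy).of_le one_le_two) hs).const_mul _).congr_deriv ?_
  congr 1
  linarith

theorem le_kernelMean_of_laplacian_nonneg {f : E → ℝ} {x : E} {r R : ℝ}
    (hf : ∀ y ∈ ball x R, ContDiffAt ℝ 2 f y) (hΔ : ∀ y ∈ ball x R, 0 ≤ (Δ f) y)
    (hr : 0 ≤ r) (hrR : r < R) : f x ≤ kernelMean f x r := by
  have habs {s : ℝ} (hs : s ∈ Icc 0 r) : |s| < R := by
    rw [abs_of_nonneg hs.1]; exact hs.2.trans_lt hrR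
  have hderiv {s : ℝ} (hs : s ∈ Icc 0 r) := hasDerivAt_kernelMean hf (habs hs)
  have hmono : MonotoneOn (kernelMean f x) (Icc 0 r) := by
    refine monotoneOn_of_deriv_nonneg (convex_Icc 0 r)
      (fun s hs ↦ (hderiv hs).continuousAt.continuousWithinAt) (fun s hs ↦
      (hderiv (interior_subset hs)).differentiableAt.differentiableWithinAt) fun s hs ↦ ?_
    replace hs := interior_subset hs
    rw [(hderiv hs).deriv]
    refine mul_nonneg (inv_nonneg.2 integral_ballKernel_pos.le)
      (mul_nonneg (by linarith [hs.1]) (integral_nonneg fun w ↦ ?_))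
    by_cases hw : w ∈ closedBall 0 1
    · exact mul_nonneg (hΔ _ (closedBall_subset_ball (habs hs)
        (mapsTo_add_smul_closedBall x s hw))) (sq_nonneg _)
    · simp [ballKernel_eq_zero_of_notMem hw]
  simpa only [kernelMean_zero] using hmono (left_mem_Icc.2 hr) (right_mem_Icc.2 hr) hr

theorem kernelMean_eq_of_harmonicOnNhd {f : E → ℝ} {x : E} {r R : ℝ}
    (hf : HarmonicOnNhd f (ball x R)) (hr : 0 ≤ r) (hrR : r < R) : kernelMean f x r = f x := by
  refine le_antisymm ?_ (le_kernelMean_of_laplacian_nonneg (fun y hy ↦ (hf y hy).1)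
    (fun y hy ↦ (hf y hy).2.self_of_nhds.ge) hr hrR)
  have hneg := le_kernelMean_of_laplacian_nonneg (f := -f) (fun y hy ↦ (hf.neg y hy).1)
    (fun y hy ↦ (hf.neg y hy).2.self_of_nhds.ge) hr hrR
  simpa only [kernelMean_neg, Pi.neg_apply, neg_le_neg_iff] using hneg

lemma kernelMean_eq_integral_sub (f : E → ℝ) (x : E) {r : ℝ} (hr : 0 < r) :
    kernelMean f x r = (∫ w : E, ballKernel w)⁻¹ * ((r ^ finrank ℝ E)⁻¹ *
      ∫ y, f y * ballKernel (r⁻¹ • (y - x))) := by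
  have hscale := Measure.integral_comp_smul_of_nonneg (volume : Measure E)
    (fun y ↦ f (x + y) * ballKernel (r⁻¹ • y)) r (hR := hr.le)
  have hshift := integral_add_left_eq_self (μ := (volume : Measure E))
    (fun y ↦ f y * ballKernel (r⁻¹ • (y - x))) x
  simp only [inv_smul_smul₀ hr.ne', smul_eq_mul, add_sub_cancel_left] at hscale hshift
  rw [kernelMean, hscale, hshift]

lemma kernelMean_mono {f g : E → ℝ} {x : E} {r : ℝ} (hf : ContinuousOn f (closedBall x |r|))
    (hg : ContinuousOn g (closedBall x |r|)) (hfg : ∀ y ∈ closedBall x |r|, f y ≤ g y) :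
    kernelMean f x r ≤ kernelMean g x r := by
  refine mul_le_mul_of_nonneg_left (integral_mono (integrable_comp_add_smul_mul_ballKernel hf)
    (integrable_comp_add_smul_mul_ballKernel hg) fun w ↦ ?_)
    (inv_nonneg.2 integral_ballKernel_pos.le)
  by_cases hw : w ∈ closedBall 0 1
  · exact mul_le_mul_of_nonneg_right (hfg _ (mapsTo_add_smul_closedBall x r hw))
      (ballKernel_nonneg w)
  · simp [ballKernel_eq_zero_of_notMem hw]

lemma integrable_mul_ballKernel_smul_sub {f : E → ℝ} {x : E} {r : ℝ} (hr : 0 < r)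
    (hf : ContinuousOn f (closedBall x r)) :
    Integrable fun y ↦ f y * ballKernel (r⁻¹ • (y - x)) := by
  refine integrable_of_continuousOn_closedBall (x := x) (r := r) (by fun_prop) fun y hy ↦ ?_
  rw [ballKernel_inv_smul_sub_eq_zero hr (not_le.1 hy).le, mul_zero]

lemma integral_mul_ballKernel_le_two_mul {f : E → ℝ} {a b : E} {r : ℝ} (hr : 0 < r)
    (hf : ContinuousOn f (closedBall b (3 * r))) (hnonneg : ∀ y ∈ closedBall b (3 * r), 0 ≤ f y)
    (hab : dist a b ≤ r) :
    ∫ y, f y * ballKernel (r⁻¹ • (y - a)) ≤ 2 * ∫ y, f y * ballKernel ((3 * r)⁻¹ • (y - b)) := by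
  rw [← integral_const_mul]
  refine integral_mono (integrable_mul_ballKernel_smul_sub hr
    (hf.mono (closedBall_subset_closedBall' (by linarith))))
    ((integrable_mul_ballKernel_smul_sub (by positivity) hf).const_mul 2) fun y ↦ ?_
  have hkernel := ballKernel_le_two_mul_ballKernel (y := y) hr hab
  by_cases hy : y ∈ closedBall b (3 * r)
  · linarith [mul_le_mul_of_nonneg_left hkernel (hnonneg y hy)]
  · have hzero := ballKernel_inv_smul_sub_eq_zero (by positivity) (not_le.1 hy).le
    rw [hzero, mul_zero] at hkernel
    rw [hzero, le_antisymm hkernel (ballKernel_nonneg _), mul_zero, mul_zero]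

theorem harnack_of_dist_le {f : E → ℝ} {a b : E} {r : ℝ} (hr : 0 < r)
    (hf : HarmonicOnNhd f (ball b (4 * r))) (hnonneg : ∀ y ∈ ball b (4 * r), 0 ≤ f y)
    (hab : dist a b ≤ r) : f a ≤ 2 * 3 ^ finrank ℝ E * f b := by
  have hsub : ball a (2 * r) ⊆ ball b (4 * r) := ball_subset_ball' (by linarith)
  calc f a = (∫ w : E, ballKernel w)⁻¹ * ((r ^ finrank ℝ E)⁻¹ *
        ∫ y, f y * ballKernel (r⁻¹ • (y - a))) := by
        rw [← kernelMean_eq_integral_sub f a hr,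
          kernelMean_eq_of_harmonicOnNhd (hf.mono hsub) hr.le (by linarith)]
    _ ≤ (∫ w : E, ballKernel w)⁻¹ * ((r ^ finrank ℝ E)⁻¹ *
        (2 * ∫ y, f y * ballKernel ((3 * r)⁻¹ • (y - b)))) := by
        have := integral_ballKernel_pos (E := E)
        have hsub' : closedBall b (3 * r) ⊆ ball b (4 * r) := closedBall_subset_ball (by linarith)
        gcongr
        exact integral_mul_ballKernel_le_two_mul hr (hf.continuousOn.mono hsub')
          (fun y hy ↦ hnonneg y (hsub' hy)) hab
    _ = 2 * 3 ^ finrank ℝ E * kernelMean f b (3 * r) := by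
        rw [kernelMean_eq_integral_sub f b (by positivity : 0 < 3 * r), mul_pow]
        field_simp
    _ = 2 * 3 ^ finrank ℝ E * f b := by
        rw [kernelMean_eq_of_harmonicOnNhd hf (by positivity) (by linarith)]

variable (E) in
/-- A lower bound for the share of the total mass of `ballKernel` carried by a ball of radius `δ`
contained in the ball of centre `0` and radius `a`. -/
def ballKernelShare (a δ : ℝ) : ℝ :=
  (1 - a ^ 2) * volume.real (ball (0 : E) δ) / ∫ w : E, ballKernel w

lemma ballKernelShare_pos {a δ : ℝ} (ha : a ^ 2 < 1) (hδ : 0 < δ) : 0 < ballKernelShare E a δ :=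
  div_pos (_root_.mul_pos (sub_pos.2 ha) (ENNReal.toReal_pos (measure_ball_pos _ _ hδ).ne'
    measure_ball_lt_top.ne)) integral_ballKernel_pos

lemma kernelMean_le_sub {f : E → ℝ} {x z : E} {r a δ M N : ℝ} (hr : 0 < r)
    (hf : ContinuousOn f (closedBall x r)) (hM : ∀ y ∈ closedBall x r, f y ≤ M) (hNM : N ≤ M)
    (hsub : ball z (δ * r) ⊆ ball x (a * r)) (hN : ∀ y ∈ ball z (δ * r), f y ≤ N) :
    kernelMean f x r ≤ M - ballKernelShare E a δ * (M - N) := by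
  let S : Set E := ball (r⁻¹ • (z - x)) δ
  have hS {w : E} (hw : w ∈ S) : x + r • w ∈ ball z (δ * r) := (add_smul_mem_ball_iff hr).2 hw
  have hSnorm {w : E} (hw : w ∈ S) : ‖w‖ ≤ a := by
    have hball := (add_smul_mem_ball_iff hr).1 (hsub (hS hw))
    rw [sub_self, smul_zero, mem_ball_zero_iff] at hball
    exact hball.le
  have hpoint (w : E) : f (x + r • w) * ballKernel w ≤
      M * ballKernel w - S.indicator (fun _ ↦ (1 - a ^ 2) * (M - N)) w := by
    by_cases hw : w ∈ S
    · rw [indicator_of_mem hw]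
      nlinarith [mul_le_mul_of_nonneg_right (hN _ (hS hw)) (ballKernel_nonneg w),
        mul_le_mul_of_nonneg_right (one_sub_sq_le_ballKernel (hSnorm hw)) (sub_nonneg.2 hNM)]
    · rw [indicator_of_notMem hw, sub_zero]
      by_cases hw' : w ∈ closedBall 0 1
      · have hmem := mapsTo_add_smul_closedBall x r hw'
        rw [abs_of_pos hr] at hmem
        exact mul_le_mul_of_nonneg_right (hM _ hmem) (ballKernel_nonneg w)
      · simp [ballKernel_eq_zero_of_notMem hw']
  have hindicator : Integrable (S.indicator fun _ ↦ (1 - a ^ 2) * (M - N)) :=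
    (integrable_indicator_iff measurableSet_ball).2 (integrableOn_const measure_ball_lt_top.ne)
  have hkernel := integrable_ballKernel (E := E)
  have hint := integral_mono (integrable_comp_add_smul_mul_ballKernel
    ((abs_of_pos hr).symm ▸ hf)) ((hkernel.const_mul M).sub hindicator) hpoint
  have hvolume : volume.real S = volume.real (ball (0 : E) δ) :=
    Measure.addHaar_real_ball_center volume _ δ
  simp only [Pi.sub_apply] at hint
  rw [integral_sub (hkernel.const_mul M) hindicator, integral_const_mul,
    integral_indicator_const _ measurableSet_ball, smul_eq_mul, hvolume] at hint
  have hpos := integral_ballKernel_pos (E := E)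
  rw [kernelMean, ballKernelShare, inv_mul_le_iff₀ hpos]
  refine hint.trans_eq ?_
  field_simp

/-- A function lying below its averages `kernelMean` over all balls: for continuous functions, a
formulation of subharmonicity on the whole space. -/
def IsSubmean (f : E → ℝ) : Prop := ∀ x r, 0 ≤ r → f x ≤ kernelMean f x r

lemma exists_inv_one_sub_pow_lt {η : ℝ} (hη : 0 < η) (τ : ℕ) :
    ∃ l ∈ Ioc (0 : ℝ) (1 / 4), ((1 - l) ^ τ)⁻¹ < 1 + η := by
  have hcont : ContinuousAt (fun l : ℝ ↦ ((1 - l) ^ τ)⁻¹) 0 :=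
    ContinuousAt.inv₀ (by fun_prop) (by simp)
  have hlt : ∀ᶠ l : ℝ in 𝓝 0, ((1 - l) ^ τ)⁻¹ < 1 + η :=
    hcont.eventually_lt continuousAt_const (by simpa using hη)
  obtain ⟨l, hl, hlη⟩ := ((hlt.filter_mono nhdsWithin_le_nhds).and
    (Ioc_mem_nhdsGT (by norm_num : (0 : ℝ) < 1 / 4))).exists
  exact ⟨l, hlη, hl⟩

lemma IsSubmean.mul_le_of_isMaxOn {f : E → ℝ} (hf : IsSubmean f) (hcont : Continuous f)
    (hnonneg : ∀ y, 0 ≤ f y) {x y z : E} {R l a δ K : ℝ} {τ : ℕ} (hl : l ∈ Ioo 0 1)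
    (hshare : ((1 - l) ^ τ)⁻¹ < 1 + ballKernelShare E a δ / 2) (hshare' : 0 ≤ ballKernelShare E a δ)
    (hy : dist y x < R) (hfy : 0 < f y)
    (hmax : IsMaxOn (fun y ↦ (R - dist y x) ^ τ * f y) (closedBall x R) y)
    (hsub : ball z (δ * (l * (R - dist y x))) ⊆ ball y (a * (l * (R - dist y x))))
    (hK : ∀ p ∈ ball z (δ * (l * (R - dist y x))), (l * (R - dist y x)) ^ τ * f p ≤ K) :
    (R - dist y x) ^ τ * f y ≤ 2 * K / l ^ τ := by
  obtain ⟨hl0, hl1⟩ := hl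
  set d := R - dist y x
  have hd : 0 < d := sub_pos.2 hy
  have hl1' : 0 < 1 - l := sub_pos.2 hl1
  by_contra! hlarge
  have hlarge' : 2 * K < (l * d) ^ τ * f y := by
    rwa [div_lt_iff₀ (by positivity), mul_right_comm, ← mul_pow, mul_comm d] at hlarge
  have hball (p) (hp : p ∈ closedBall y (l * d)) : f p ≤ ((1 - l) ^ τ)⁻¹ * f y := by
    have hdist : (1 - l) * d ≤ R - dist p x := by
      linarith [dist_triangle p y x, mem_closedBall.1 hp, show d = R - dist y x from rfl]
    have hp' : p ∈ closedBall x R := by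
      rw [mem_closedBall]; nlinarith
    rw [← div_eq_inv_mul, le_div_iff₀ (by positivity), mul_comm]
    refine le_of_mul_le_mul_left ?_ (pow_pos hd τ)
    calc d ^ τ * ((1 - l) ^ τ * f p) = ((1 - l) * d) ^ τ * f p := by rw [mul_pow]; ring
      _ ≤ (R - dist p x) ^ τ * f p := by gcongr; exact hnonneg p
      _ ≤ d ^ τ * f y := hmax hp'
  have hhalf (p) (hp : p ∈ ball z (δ * (l * d))) : f p ≤ f y / 2 := by
    refine le_of_mul_le_mul_left ?_ (pow_pos (mul_pos hl0 hd) τ)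
    linarith [hK p hp]
  have hone : 1 ≤ ((1 - l) ^ τ)⁻¹ :=
    (one_le_inv₀ (by positivity)).2 (pow_le_one₀ hl1'.le (by linarith))
  have hmean := (hf y (l * d) (by positivity)).trans (kernelMean_le_sub (by positivity)
    hcont.continuousOn hball (by nlinarith) hsub hhalf)
  linarith [mul_lt_mul_of_pos_right hshare hfy,
    mul_nonneg hshare' (mul_nonneg (sub_nonneg.2 hone) hfy.le)]

-- Domar's argument: at a maximum point `y` of the weighted function, values near `y` barely exceed
-- `f y`. If `f y` were large, `f` would be at most `f y / 2` on a fixed proportion of the ball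
-- around `y`, and the submean inequality at `y` would fail.
lemma IsSubmean.exists_forall_mul_le {a δ : ℝ} (ha : a ^ 2 < 1) (hδ : 0 < δ) {τ : ℕ}
    (hτ : τ ≠ 0) :
    ∃ l ∈ Ioc (0 : ℝ) (1 / 4), ∀ {f : E → ℝ}, Continuous f → (∀ y, 0 ≤ f y) → IsSubmean f →
      ∀ {x : E} {R K : ℝ}, 0 < R → 0 ≤ K →
      (∀ y ∈ closedBall x R, 0 < f y → ∀ ρ ∈ Ioc 0 (l * R), ∃ z,
        ball z (δ * ρ) ⊆ ball y (a * ρ) ∧ ∀ p ∈ ball z (δ * ρ), ρ ^ τ * f p ≤ K) →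
      ∀ y ∈ closedBall x R, (R - dist y x) ^ τ * f y ≤ 2 * K / l ^ τ := by
  have hshare := ballKernelShare_pos (E := E) ha hδ
  obtain ⟨l, hl, hlshare⟩ := exists_inv_one_sub_pow_lt (half_pos hshare) τ
  refine ⟨l, hl, fun {f} hcont hnonneg hf {x R K} hR hK hsmall y hy ↦ ?_⟩
  obtain ⟨y₀, hy₀, hmax⟩ := (isCompact_closedBall x R).exists_isMaxOn
    ⟨x, mem_closedBall_self hR.le⟩ (f := fun y ↦ (R - dist y x) ^ τ * f y) (by fun_prop)
  refine (hmax hy).trans ?_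
  have hl0 := hl.1
  rcases (hnonneg y₀).eq_or_lt' with hzero | hpos
  · simp only [hzero, mul_zero]; positivity
  rcases (mem_closedBall.1 hy₀).eq_or_lt with hdist | hdist
  · simp only [hdist, sub_self, zero_pow hτ, zero_mul]; positivity
  obtain ⟨z, hsub, hz⟩ := hsmall y₀ hy₀ hpos (l * (R - dist y₀ x))
    ⟨mul_pos hl0 (sub_pos.2 hdist), by gcongr; linarith [dist_nonneg (x := y₀) (y := x)]⟩
  exact hf.mul_le_of_isMaxOn hcont hnonneg ⟨hl0, by linarith [hl.2]⟩ hlshare hshare.le hdist hpos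
    hmax hsub hz

end BallKernel

section HarmonicProfile

variable {E : Type*} [NormedAddCommGroup E] [InnerProductSpace ℝ E] [FiniteDimensional ℝ E]
  {U : Set E} {h : E → ℝ}

/-- A harmonic profile of `U`: a positive harmonic function on `U` that is continuous up to the
boundary and vanishes there. -/
structure IsHarmonicProfile (U : Set E) (h : E → ℝ) : Prop where
  continuousOn : ContinuousOn h (closure U)
  pos : ∀ y ∈ U, 0 < h y
  harmonicOnNhd : HarmonicOnNhd h U
  eq_zero : ∀ y ∈ frontier U, h y = 0

lemma IsHarmonicProfile.continuous_indicator (hh : IsHarmonicProfile U h) :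
    Continuous (U.indicator h) :=
  _root_.continuous_indicator hh.eq_zero hh.continuousOn

lemma IsHarmonicProfile.indicator_nonneg (hh : IsHarmonicProfile U h) (y : E) :
    0 ≤ U.indicator h y :=
  Set.indicator_nonneg (fun y hy ↦ (hh.pos y hy).le) y

lemma laplacian_comp_nonneg_of_harmonicAt {φ : ℝ → ℝ} {f : E → ℝ} {x : E} (hφ : ContDiff ℝ 2 φ)
    (hφ'' : 0 ≤ deriv (deriv φ) (f x)) (hf : HarmonicAt f x) : 0 ≤ (Δ (φ ∘ f)) x := by
  rw [laplacian_comp_eq hφ hf.1 (stdOrthonormalBasis ℝ E), hf.2.self_of_nhds, Pi.zero_apply,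
    mul_zero, add_zero]
  positivity

lemma deriv_deriv_max_sub_pow_three_nonneg (ε t : ℝ) :
    0 ≤ deriv (deriv fun t : ℝ ↦ max (t - ε) 0 ^ 3) t := by
  have hderiv (s : ℝ) : HasDerivAt (fun t : ℝ ↦ max (t - ε) 0 ^ 3) (3 * max (s - ε) 0 ^ 2) s :=
    ((hasDerivAt_max_zero_pow 1 (s - ε)).comp_sub_const s ε).congr_deriv (by norm_num)
  have hderiv' := ((hasDerivAt_max_zero_pow 0 (t - ε)).comp_sub_const t ε).const_mul 3
  rw [funext fun s ↦ (hderiv s).deriv, hderiv'.deriv]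
  positivity

lemma IsHarmonicProfile.contDiffAt_and_laplacian_nonneg (hU : IsOpen U)
    (hh : IsHarmonicProfile U h) {ε : ℝ} (hε : 0 < ε) (y : E) :
    ContDiffAt ℝ 2 (fun y ↦ max (U.indicator h y - ε) 0 ^ 3) y ∧
      0 ≤ (Δ fun y ↦ max (U.indicator h y - ε) 0 ^ 3) y := by
  have hφ : ContDiff ℝ 2 fun t : ℝ ↦ max (t - ε) 0 ^ 3 :=
    (contDiff_max_zero_pow 2).comp (contDiff_id.sub contDiff_const)
  by_cases hy : y ∈ U
  · have heq : (fun y ↦ max (U.indicator h y - ε) 0 ^ 3) =ᶠ[𝓝 y]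
        (fun t : ℝ ↦ max (t - ε) 0 ^ 3) ∘ h := by
      filter_upwards [hU.mem_nhds hy] with p hp
      rw [indicator_of_mem hp, Function.comp_apply]
    rw [(laplacian_congr_nhds heq).self_of_nhds]
    exact ⟨(hφ.contDiffAt.comp y (hh.harmonicOnNhd y hy).1).congr_of_eventuallyEq heq,
      laplacian_comp_nonneg_of_harmonicAt hφ (deriv_deriv_max_sub_pow_three_nonneg ε _)
        (hh.harmonicOnNhd y hy)⟩
  · have heq : (fun y ↦ max (U.indicator h y - ε) 0 ^ 3) =ᶠ[𝓝 y] fun _ ↦ 0 := by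
      filter_upwards [hh.continuous_indicator.continuousAt.eventually_lt continuousAt_const
        (by rwa [indicator_of_notMem hy])] with p hp
      rw [max_eq_right (sub_nonpos.2 hp.le), zero_pow three_ne_zero]
    rw [(laplacian_congr_nhds heq).self_of_nhds]
    exact ⟨contDiffAt_const.congr_of_eventuallyEq heq, by simp⟩

variable [MeasurableSpace E] [BorelSpace E]

-- Truncating at height `ε` removes the boundary, and `t ↦ (t - ε)₊ ^ 3` is convex and `C²`.
lemma IsHarmonicProfile.isSubmean_pow_three (hU : IsOpen U) (hh : IsHarmonicProfile U h) :
    IsSubmean fun y ↦ U.indicator h y ^ 3 := by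
  intro x r hr
  have hcont := hh.continuous_indicator
  have htrunc (ε : ℝ) (hε : 0 < ε) : max (U.indicator h x - ε) 0 ^ 3 ≤
      kernelMean (fun y ↦ U.indicator h y ^ 3) x r :=
    (le_kernelMean_of_laplacian_nonneg
      (fun y _ ↦ (hh.contDiffAt_and_laplacian_nonneg hU hε y).1)
      (fun y _ ↦ (hh.contDiffAt_and_laplacian_nonneg hU hε y).2) hr (lt_add_one r)).trans <|
    kernelMean_mono (by fun_prop) (by fun_prop) fun y _ ↦ pow_le_pow_left₀ (le_max_right _ _)
      (max_le (by linarith) (hh.indicator_nonneg y)) 3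
  have hlim : Tendsto (fun ε ↦ max (U.indicator h x - ε) 0 ^ 3) (𝓝[>] 0)
      (𝓝 (U.indicator h x ^ 3)) := by
    have : Continuous fun ε ↦ max (U.indicator h x - ε) 0 ^ 3 := by fun_prop
    simpa [max_eq_left (hh.indicator_nonneg x)] using (this.tendsto 0).mono_left nhdsWithin_le_nhds
  exact le_of_tendsto hlim (eventually_nhdsWithin_of_forall htrunc)

end HarmonicProfile

section UniformDomain

lemma ball_subset_of_le_infDist_frontier {E : Type*} [SeminormedAddCommGroup E] [NormedSpace ℝ E]
    {U : Set E} (hU : IsOpen U) {z : E} (hz : z ∈ U) {ρ : ℝ} (hρ : ρ ≤ infDist z (frontier U)) :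
    ball z ρ ⊆ U := by
  rcases le_or_gt ρ 0 with hρ0 | hρ0
  · rw [ball_eq_empty.2 hρ0]
    exact empty_subset U
  refine (convex_ball z ρ).isPreconnected.subset_of_closure_inter_subset hU
    ⟨z, mem_ball_self hρ0, hz⟩ fun w ⟨hw, hwball⟩ ↦ by_contra fun hwU ↦ ?_
  exact disjoint_left.1 disjoint_ball_infDist (ball_subset_ball hρ hwball)
    (hU.frontier_eq ▸ ⟨hw, hwU⟩)

lemma le_pow_mul_of_eVariationOn_le {X : Type*} [PseudoMetricSpace X] {γ : ℝ → X} {f : X → ℝ}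
    {b ε H : ℝ} (hε : 0 ≤ ε) (hH : 1 ≤ H) (hb : 0 ≤ f (γ b)) (N : ℕ) :
    ∀ a ≤ b, ContinuousOn γ (Icc a b) →
      (∀ s ∈ Icc a b, ∀ t ∈ Icc a b, dist (γ s) (γ t) ≤ ε → f (γ s) ≤ H * f (γ t)) →
      eVariationOn γ (Icc a b) ≤ ENNReal.ofReal (N * ε) → f (γ a) ≤ H ^ (N + 1) * f (γ b) := by
  induction N with
  | zero =>
    intro a hab _ hstep hlen
    have hdist := (eVariationOn.edist_le γ (left_mem_Icc.2 hab) (right_mem_Icc.2 hab)).trans hlen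
    rw [edist_le_ofReal (by positivity), Nat.cast_zero, zero_mul] at hdist
    simpa using hstep a (left_mem_Icc.2 hab) b (right_mem_Icc.2 hab) (hdist.trans hε)
  | succ N ih =>
    intro a hab hγ hstep hlen
    rcases le_total (dist (γ a) (γ b)) ε with hclose | hfar
    · exact (hstep a (left_mem_Icc.2 hab) b (right_mem_Icc.2 hab) hclose).trans
        (mul_le_mul_of_nonneg_right (le_self_pow₀ hH (by omega)) hb)
    obtain ⟨t, ht, hdist⟩ := intermediate_value_Icc hab
      (show ContinuousOn (fun t ↦ dist (γ a) (γ t)) (Icc a b) by fun_prop)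
      (show ε ∈ Icc _ _ by simpa only [dist_self] using ⟨hε, hfar⟩)
    replace hdist : dist (γ a) (γ t) = ε := hdist
    have hsub : Icc t b ⊆ Icc a b := Icc_subset_Icc_left ht.1
    have hlen' : eVariationOn γ (Icc t b) ≤ ENNReal.ofReal (N * ε) := by
      have hadd := eVariationOn.Icc_add_Icc γ (s := univ) ht.1 ht.2 (mem_univ t)
      simp only [univ_inter] at hadd
      have hfirst := eVariationOn.edist_le γ (left_mem_Icc.2 ht.1) (right_mem_Icc.2 ht.1)
      rw [edist_dist, hdist] at hfirst
      refine (ENNReal.add_le_add_iff_left (a := ENNReal.ofReal ε) ofReal_ne_top).1 ?_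
      calc ENNReal.ofReal ε + eVariationOn γ (Icc t b) ≤ eVariationOn γ (Icc a b) := by
            rw [← hadd]; gcongr
        _ ≤ ENNReal.ofReal ((N + 1 : ℕ) * ε) := hlen
        _ = ENNReal.ofReal ε + ENNReal.ofReal (N * ε) := by
            rw [← ofReal_add hε (by positivity)]; push_cast; ring_nf
    calc f (γ a) ≤ H * f (γ t) := hstep a (left_mem_Icc.2 hab) t ht hdist.le
      _ ≤ H * (H ^ (N + 1) * f (γ b)) := by
          gcongr
          exact ih t ht.2 (hγ.mono hsub) (fun s hs t ht ↦ hstep s (hsub hs) t (hsub ht)) hlen'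
      _ = H ^ (N + 1 + 1) * f (γ b) := by ring

variable {n : ℕ} {c C : ℝ} {U : Set (En n)} {h : En n → ℝ}

lemma IsUniformDomain.exists_corkscrew (hU : IsUniformDomain c C U) (hc : 0 ≤ c)
    (hunb : ¬ Bornology.IsBounded U) {y : En n} (hy : y ∈ U) {t : ℝ} (ht : 0 ≤ t) :
    ∃ a ∈ U, dist y a = t ∧ c * t ≤ infDist a (frontier U) := by
  obtain ⟨b, hb, hyb⟩ : ∃ b ∈ U, 2 * t ≤ dist y b := by
    by_contra! hclose
    exact hunb (isBounded_ball.subset fun b hb ↦ mem_ball'.2 (hclose b hb))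
  obtain ⟨γ, ⟨hγ, hγU, hγ0, hγ1⟩, -, hthick⟩ := hU.2.2 y hy b hb
  obtain ⟨s, hs, rfl⟩ := intermediate_value_Icc zero_le_one
    (show ContinuousOn (fun s ↦ dist y (γ s)) (Icc 0 1) by fun_prop)
    (show t ∈ Icc _ _ by simp only [hγ0, hγ1, dist_self]; exact ⟨ht, by linarith⟩)
  refine ⟨γ s, hγU hs, rfl, le_trans ?_ (hthick s hs)⟩
  gcongr
  exact le_min le_rfl (by linarith [dist_triangle y (γ s) b])

/-- The constant with which a positive harmonic function on a `(c, C)`-uniform domain of `ℝⁿ`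
compares two points at distance at most `M` times their distances to the boundary: the one-step
Harnack constant `2 * 3 ^ n`, raised to the length of a Harnack chain along a uniform curve. -/
def harnackConst (n : ℕ) (c C M : ℝ) : ℝ := (2 * 3 ^ n) ^ (⌈8 * C * M / c⌉₊ + 1)

lemma one_le_two_mul_three_pow (n : ℕ) : (1 : ℝ) ≤ 2 * 3 ^ n := by
  linarith [one_le_pow₀ (n := n) (show (1 : ℝ) ≤ 3 by norm_num)]

lemma one_le_harnackConst (n : ℕ) (c C M : ℝ) : 1 ≤ harnackConst n c C M :=
  one_le_pow₀ (one_le_two_mul_three_pow n)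

lemma IsUniformDomain.le_harnackConst_mul (hU : IsUniformDomain c C U) (hc : 0 < c) (hc1 : c ≤ 1)
    (hC : 0 ≤ C) (hh : HarmonicOnNhd h U) (hnonneg : ∀ y ∈ U, 0 ≤ h y) {δ M : ℝ} (hδ : 0 < δ)
    {a b : En n} (ha : a ∈ U) (hb : b ∈ U) (hδa : δ ≤ infDist a (frontier U))
    (hδb : δ ≤ infDist b (frontier U)) (hab : dist a b ≤ M * δ) :
    h a ≤ harnackConst n c C M * h b := by
  obtain ⟨γ, ⟨hγ, hγU, rfl, rfl⟩, hlen, hthick⟩ := hU.2.2 a ha b hb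
  have hball (t : ℝ) (ht : t ∈ Icc (0 : ℝ) 1) : ball (γ t) (4 * (c * δ / 8)) ⊆ U := by
    refine ball_subset_of_le_infDist_frontier hU.1 (hγU ht) ?_
    have hcδ : c * δ ≤ δ := mul_le_of_le_one_left hδ.le hc1
    rcases le_total (dist (γ 0) (γ t)) (δ / 2) with hnear0 | hfar0
    · linarith [infDist_le_infDist_add_dist (s := frontier U) (x := γ 0) (y := γ t)]
    rcases le_total (dist (γ t) (γ 1)) (δ / 2) with hnear1 | hfar1
    · linarith [infDist_le_infDist_add_dist (s := frontier U) (x := γ 1) (y := γ t),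
        dist_comm (γ 1) (γ t)]
    linarith [hthick t ht, mul_le_mul_of_nonneg_left (le_min hfar0 hfar1) hc.le]
  refine le_pow_mul_of_eVariationOn_le (ε := c * δ / 8) (by positivity)
    (one_le_two_mul_three_pow n) (hnonneg _ hb) _ 0 zero_le_one hγ (fun s _ t ht hst ↦ ?_)
    (hlen.trans (ofReal_le_ofReal ?_))
  · simpa only [finrank_euclideanSpace_fin] using harnack_of_dist_le (by positivity)
      (hh.mono (hball t ht)) (fun y hy ↦ hnonneg y (hball t ht hy)) hst
  · calc C * dist (γ 0) (γ 1) ≤ C * (M * δ) := by gcongr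
      _ = 8 * C * M / c * (c * δ / 8) := by field_simp
      _ ≤ ⌈8 * C * M / c⌉₊ * (c * δ / 8) := by gcongr; exact Nat.le_ceil _

lemma IsUniformDomain.le_harnackConst_pow_mul (hU : IsUniformDomain c C U) (hc : 0 < c)
    (hc1 : c ≤ 1) (hC : 0 ≤ C) (hunb : ¬ Bornology.IsBounded U) (hh : HarmonicOnNhd h U)
    (hnonneg : ∀ y ∈ U, 0 ≤ h y) {κ r : ℝ} (hκ : 0 < κ) (hκc : κ ≤ c) (hr : 0 < r) {y z : En n}
    (hy : y ∈ U) (hz : z ∈ U) (hκz : κ * r ≤ infDist z (frontier U)) (hyz : dist y z ≤ 6 * r)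
    (k : ℕ) : ∀ a ∈ U, dist a y ≤ r / 2 ^ k → κ * (r / 2 ^ k) ≤ infDist a (frontier U) →
      h a ≤ harnackConst n c C (7 / κ) ^ (k + 1) * h z := by
  have hlink {s : ℝ} {a b : En n} (hs : 0 < s) (ha : a ∈ U) (hb : b ∈ U)
      (hκa : κ * s ≤ infDist a (frontier U)) (hκb : κ * s ≤ infDist b (frontier U))
      (hab : dist a b ≤ 7 * s) : h a ≤ harnackConst n c C (7 / κ) * h b :=
    hU.le_harnackConst_mul hc hc1 hC hh hnonneg (mul_pos hκ hs) ha hb hκa hκb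
      (hab.trans_eq (by field_simp))
  induction k with
  | zero =>
    intro a ha hay hκa
    rw [pow_zero, div_one] at hay hκa
    rw [zero_add, pow_one]
    exact hlink hr ha hz hκa hκz (by linarith [dist_triangle a y z])
  | succ k ih =>
    intro a ha hay hκa
    obtain ⟨a', ha', hya', hca'⟩ := hU.exists_corkscrew hc.le hunb hy
      (show 0 ≤ r / 2 ^ k by positivity)
    have hs : 0 < r / 2 ^ (k + 1) := by positivity
    have hhalf : r / 2 ^ k = 2 * (r / 2 ^ (k + 1)) := by field_simp; ring
    have hκa' : κ * (r / 2 ^ k) ≤ infDist a' (frontier U) := le_trans (by gcongr) hca'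
    calc h a ≤ harnackConst n c C (7 / κ) * h a' :=
          hlink hs ha ha' hκa (by nlinarith) (by linarith [dist_triangle a y a'])
      _ ≤ harnackConst n c C (7 / κ) * (harnackConst n c C (7 / κ) ^ (k + 1) * h z) := by
          have := one_le_harnackConst n c C (7 / κ)
          gcongr
          exact ih a' ha' (by rw [dist_comm, hya']) hκa'
      _ = harnackConst n c C (7 / κ) ^ (k + 1 + 1) * h z := by ring

lemma IsUniformDomain.pow_mul_le (hU : IsUniformDomain c C U) (hc : 0 < c)
    (hc1 : c ≤ 1) (hC : 0 ≤ C) (hunb : ¬ Bornology.IsBounded U) (hh : HarmonicOnNhd h U)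
    (hnonneg : ∀ y ∈ U, 0 ≤ h y) {κ r : ℝ} (hκ : 0 < κ) (hκc : κ ≤ c) {z : En n} (hz : z ∈ U)
    (hκz : κ * r ≤ infDist z (frontier U)) {τ : ℕ} (hτ : harnackConst n c C (7 / κ) ≤ 2 ^ τ)
    {ρ : ℝ} (hρ : 0 < ρ) (hρr : ρ ≤ r) {p : En n} (hp : p ∈ U)
    (hκp : κ * ρ ≤ infDist p (frontier U)) (hpz : dist p z ≤ 6 * r) :
    ρ ^ τ * h p ≤ harnackConst n c C (7 / κ) * (2 * r) ^ τ * h z := by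
  have hr := hρ.trans_le hρr
  set H := harnackConst n c C (7 / κ)
  have hH : 1 ≤ H := one_le_harnackConst n c C (7 / κ)
  obtain ⟨k, hk, hk'⟩ := exists_nat_pow_near ((one_le_div hρ).2 hρr) one_lt_two
  have hrρ : r / 2 ^ (k + 1) ≤ ρ := (div_lt_comm₀ hρ (by positivity)).1 hk' |>.le
  have hρk : ρ * 2 ^ (k + 1) ≤ 2 * r := by
    rw [le_div_iff₀ hρ] at hk
    rw [pow_succ]
    linarith
  have hgrowth := hU.le_harnackConst_pow_mul hc hc1 hC hunb hh hnonneg hκ hκc hr hp hz hκz hpz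
    (k + 1) p hp (by rw [dist_self]; positivity) (le_trans (by gcongr) hκp)
  have hz0 := hnonneg z hz
  calc ρ ^ τ * h p ≤ ρ ^ τ * (H * H ^ (k + 1) * h z) := by
        gcongr
        rwa [← pow_succ']
    _ ≤ ρ ^ τ * (H * (2 ^ τ) ^ (k + 1) * h z) := by gcongr
    _ = H * (ρ * 2 ^ (k + 1)) ^ τ * h z := by rw [pow_right_comm, mul_pow]; ring
    _ ≤ H * (2 * r) ^ τ * h z := by gcongr

lemma IsUniformDomain.exists_ball_subset_pow_mul_le (hU : IsUniformDomain c C U) (hc : 0 < c)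
    (hc1 : c ≤ 1) (hC : 0 ≤ C) (hunb : ¬ Bornology.IsBounded U) (hh : HarmonicOnNhd h U)
    (hnonneg : ∀ y ∈ U, 0 ≤ h y) {κ r : ℝ} (hκ : 0 < κ) (hκc : κ ≤ c / 4) {z : En n} (hz : z ∈ U)
    (hκz : κ * r ≤ infDist z (frontier U)) {τ : ℕ} (hτ : harnackConst n c C (7 / κ) ≤ 2 ^ τ)
    {ρ : ℝ} (hρ : 0 < ρ) (hρr : ρ ≤ r) {y : En n} (hy : y ∈ U) (hyz : dist y z ≤ 5 * r) :
    ∃ g, ball g (κ * ρ) ⊆ ball y (3 / 4 * ρ) ∧ ball g (κ * ρ) ⊆ U ∧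
      ∀ p ∈ ball g (κ * ρ), ρ ^ τ * h p ≤ harnackConst n c C (7 / κ) * (2 * r) ^ τ * h z := by
  obtain ⟨g, hg, hyg, hcg⟩ := hU.exists_corkscrew hc.le hunb hy (half_pos hρ).le
  have hκρ : κ * ρ ≤ c / 4 * ρ := by gcongr
  have hcρ : c * ρ ≤ ρ := mul_le_of_le_one_left hρ.le hc1
  have hsub : ball g (κ * ρ) ⊆ ball y (3 / 4 * ρ) :=
    ball_subset_ball' (by linarith [dist_comm g y])
  have hsub' : ball g (κ * ρ) ⊆ U := ball_subset_of_le_infDist_frontier hU.1 hg (by nlinarith)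
  refine ⟨g, hsub, hsub', fun p hp ↦ ?_⟩
  have hpg := mem_ball'.1 hp
  exact hU.pow_mul_le hc hc1 hC hunb hh hnonneg hκ (by linarith) hz hκz hτ hρ hρr (hsub' hp)
    (by linarith [infDist_le_infDist_add_dist (s := frontier U) (x := g) (y := p)])
    (by linarith [dist_triangle p y z, mem_ball.1 (hsub hp)])

theorem exists_forall_isHarmonicProfile_le_mul (n : ℕ) {c C κ : ℝ} (hc : 0 < c) (hc1 : c ≤ 1)
    (hC : 0 ≤ C) (hκ : 0 < κ) (hκc : κ ≤ c / 4) :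
    ∃ B : ℝ, 0 < B ∧ ∀ {U : Set (En n)}, IsUniformDomain c C U → ¬ Bornology.IsBounded U →
      ∀ {h : En n → ℝ}, IsHarmonicProfile U h → ∀ {x z : En n} {r : ℝ}, 0 < r → z ∈ U →
        dist x z ≤ r → κ * r ≤ infDist z (frontier U) →
        ∀ y ∈ U, dist y x ≤ 2 * r → h y ≤ B * h z := by
  set H := harnackConst n c C (7 / κ)
  have hH : 1 ≤ H := one_le_harnackConst n c C (7 / κ)
  obtain ⟨τ, hτ⟩ := pow_unbounded_of_one_lt H one_lt_two
  obtain ⟨l, ⟨hl0, hl4⟩, hDomar⟩ := IsSubmean.exists_forall_mul_le (E := En n) (a := 3 / 4)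
    (by norm_num) hκ (τ := 3 * (τ + 1)) (by omega)
  refine ⟨2 * H / l ^ (τ + 1), by positivity,
    fun {U} hU hunb {h} hh {x z r} hr hz hxz hκz y hy hyx ↦ ?_⟩
  have hz0 := hh.pos z hz
  have hy0 := hh.pos y hy
  have hbound := hDomar (f := fun y ↦ U.indicator h y ^ 3)
    (hh.continuous_indicator.pow 3) (fun y ↦ pow_nonneg (hh.indicator_nonneg y) 3)
    (hh.isSubmean_pow_three hU.1)
    (x := x) (R := 4 * r) (K := (H * (2 * r) ^ (τ + 1) * h z) ^ 3) (by positivity) (by positivity)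
    (fun y hy hfy ρ ⟨hρ, hρl⟩ ↦ ?_) y (mem_closedBall.2 (by linarith))
  · simp only [indicator_of_mem hy] at hbound
    refine le_of_pow_le_pow_left₀ three_ne_zero (by positivity) ?_
    refine le_of_mul_le_mul_left (?_ : (2 * r) ^ (3 * (τ + 1)) * h y ^ 3 ≤ _) (by positivity)
    calc (2 * r) ^ (3 * (τ + 1)) * h y ^ 3 ≤ (4 * r - dist y x) ^ (3 * (τ + 1)) * h y ^ 3 := by
          gcongr; linarith
      _ ≤ 2 * (H * (2 * r) ^ (τ + 1) * h z) ^ 3 / l ^ (3 * (τ + 1)) := hbound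
      _ ≤ 8 * (H * (2 * r) ^ (τ + 1) * h z) ^ 3 / l ^ (3 * (τ + 1)) := by gcongr; norm_num
      _ = (2 * r) ^ (3 * (τ + 1)) * (2 * H / l ^ (τ + 1) * h z) ^ 3 := by
          simp only [mul_pow, div_pow, ← pow_mul, mul_comm 3 (τ + 1)]; ring
  · have hyU : y ∈ U := by
      by_contra hyU
      simp [indicator_of_notMem hyU] at hfy
    obtain ⟨g, hsub, hsub', hg⟩ := hU.exists_ball_subset_pow_mul_le hc hc1 hC hunb
      hh.harmonicOnNhd (fun y hy ↦ (hh.pos y hy).le) hκ hκc hz hκz (τ := τ + 1)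
      (hτ.le.trans (pow_le_pow_right₀ one_le_two τ.le_succ)) hρ (by nlinarith) hyU
      (by linarith [dist_triangle y x z, mem_closedBall.1 hy])
    refine ⟨g, hsub, fun p hp ↦ ?_⟩
    simp only [indicator_of_mem (hsub' hp)]
    rw [mul_comm 3, pow_mul, ← mul_pow]
    exact pow_le_pow_left₀ (mul_nonneg (by positivity) (hh.pos p (hsub' hp)).le) (hg p hp) 3

end UniformDomain

section Doubling

/-- The ball of the inner metric of `U`. -/
def innerBall {X : Type*} [PseudoEMetricSpace X] (U : Set X) (x : X) (r : ℝ) : Set X :=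
  {y | y ∈ U ∧ innerDist U x y < ENNReal.ofReal r}

lemma edist_le_innerDist {X : Type*} [PseudoEMetricSpace X] (U : Set X) (x y : X) :
    edist x y ≤ innerDist U x y := by
  refine le_iInf₂ fun γ ⟨_, _, hγ0, hγ1⟩ ↦ ?_
  rw [← hγ0, ← hγ1]
  exact eVariationOn.edist_le γ (left_mem_Icc.2 zero_le_one) (right_mem_Icc.2 zero_le_one)

lemma innerBall_subset_inter_ball {X : Type*} [PseudoMetricSpace X] (U : Set X) (x : X) (r : ℝ) :
    innerBall U x r ⊆ U ∩ ball x r := fun y ⟨hy, hxy⟩ ↦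
  ⟨hy, mem_ball'.2 (edist_lt_ofReal.1 ((edist_le_innerDist U x y).trans_lt hxy))⟩

lemma IsUniformDomain.mem_innerBall {n : ℕ} {c C r : ℝ} {U : Set (En n)}
    (hU : IsUniformDomain c C U) {x y : En n} (hx : x ∈ U) (hy : y ∈ U) (hr : 0 < r)
    (hxy : C * dist x y < r) : y ∈ innerBall U x r := by
  obtain ⟨γ, hγ, hlen, -⟩ := hU.2.2 x hx y hy
  exact ⟨hy, ((iInf₂_le γ hγ).trans hlen).trans_lt ((ofReal_lt_ofReal_iff hr).2 hxy)⟩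

lemma IsHarmonicProfile.integrableOn_rpow_inter_ball {E : Type*} [NormedAddCommGroup E]
    [InnerProductSpace ℝ E] [FiniteDimensional ℝ E] [MeasurableSpace E] [BorelSpace E]
    {U : Set E} {h : E → ℝ} (hh : IsHarmonicProfile U h) {p : ℝ} (hp : 0 ≤ p) (x : E) (r : ℝ) :
    IntegrableOn (fun y ↦ h y ^ p) (U ∩ ball x r) := by
  have hcompact : IsCompact (closure U ∩ closedBall x r) :=
    (isCompact_closedBall x r).inter_left isClosed_closure
  exact (((hh.continuousOn.mono inter_subset_left).rpow_const fun _ _ ↦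
    Or.inr hp).integrableOn_compact hcompact).mono_set
      (inter_subset_inter subset_closure ball_subset_closedBall)

lemma setIntegral_le_mul_setIntegral_of_ball_subset {E : Type*} [NormedAddCommGroup E]
    [NormedSpace ℝ E] [FiniteDimensional ℝ E] [MeasurableSpace E] [BorelSpace E]
    {μ : Measure E} [μ.IsAddHaarMeasure] {f : E → ℝ} {S T : Set E} {x z : E} {R ρ m M : ℝ}
    (hR : 0 < R) (hρ : 0 < ρ) (hm : 0 < m) (hM : 0 ≤ M) (hS : S ⊆ ball x R)
    (hT : ball z ρ ⊆ T) (hfS : ∀ y ∈ S, ‖f y‖ ≤ M) (hfm : ∀ y ∈ ball z ρ, m ≤ f y)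
    (hf0 : 0 ≤ᵐ[μ.restrict T] f) (hfT : IntegrableOn f T μ) :
    ∫ y in S, f y ∂μ ≤ M / m * (R / ρ) ^ finrank ℝ E * ∫ y in T, f y ∂μ := by
  have hvol (y : E) {s : ℝ} (hs : 0 < s) :
      μ.real (ball y s) = s ^ finrank ℝ E * μ.real (ball 0 1) := by
    rw [measureReal_def, Measure.addHaar_ball_of_pos μ y hs, toReal_mul,
      toReal_ofReal (by positivity), measureReal_def]
  have hlower : m * (ρ ^ finrank ℝ E * μ.real (ball 0 1)) ≤ ∫ y in T, f y ∂μ := by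
    rw [← hvol z hρ]
    exact (setIntegral_ge_of_const_le_real measurableSet_ball measure_ball_lt_top.ne hfm
      (hfT.mono_set hT)).trans (setIntegral_mono_set hfT hf0 hT.eventuallyLE)
  calc ∫ y in S, f y ∂μ ≤ M * μ.real S :=
        (Real.le_norm_self _).trans (norm_setIntegral_le_of_norm_le_const
          ((measure_mono hS).trans_lt measure_ball_lt_top) hfS)
    _ ≤ M * (R ^ finrank ℝ E * μ.real (ball 0 1)) := by
        rw [← hvol x hR]
        gcongr
        exact measure_ball_lt_top.ne
    _ = M / m * (R / ρ) ^ finrank ℝ E *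
          (m * (ρ ^ finrank ℝ E * μ.real (ball 0 1))) := by rw [div_pow]; field_simp
    _ ≤ M / m * (R / ρ) ^ finrank ℝ E * ∫ y in T, f y ∂μ := by gcongr

theorem exists_reference_point (n : ℕ) {c C : ℝ} (hc : 0 < c) (hc1 : c ≤ 1) (hC : 1 ≤ C) :
    ∃ B : ℝ, 0 < B ∧ ∀ {U : Set (En n)}, IsUniformDomain c C U → ¬ Bornology.IsBounded U →
      ∀ {h : En n → ℝ}, IsHarmonicProfile U h → ∀ {x : En n}, x ∈ U → ∀ {r : ℝ}, 0 < r →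
        ∃ z ∈ U, ball z (c * r / (16 * C)) ⊆ innerBall U x r ∧
          (∀ y ∈ U ∩ ball x (2 * r), h y ≤ B * h z) ∧
          ∀ y ∈ ball z (c * r / (16 * C)), h z ≤ B * h y := by
  have hC0 : 0 < C := by linarith
  obtain ⟨B, hB, hbound⟩ := exists_forall_isHarmonicProfile_le_mul n hc hc1 hC0.le
    (κ := c / (4 * C)) (by positivity) (by gcongr; linarith)
  refine ⟨max B (2 * 3 ^ n), by positivity, fun {U} hU hunb {h} hh {x} hx {r} hr ↦ ?_⟩
  obtain ⟨z, hz, hxz, hcz⟩ := hU.exists_corkscrew hc.le hunb hx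
    (show 0 ≤ r / (2 * C) by positivity)
  set ρ := c * r / (16 * C) with hρ
  have hρ0 : 0 < ρ := by positivity
  have hρz : 8 * ρ ≤ infDist z (frontier U) := by
    convert hcz using 1
    rw [hρ]; field_simp; norm_num
  have hρr : 8 * (C * ρ) ≤ r := by
    rw [hρ]; field_simp; linarith
  have hsub : ball z (8 * ρ) ⊆ U := ball_subset_of_le_infDist_frontier hU.1 hz hρz
  refine ⟨z, hz, fun y hy ↦ ?_, fun y ⟨hy, hyx⟩ ↦ ?_, fun y hy ↦ ?_⟩
  · have hyz := mem_ball'.1 hy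
    refine hU.mem_innerBall hx (hsub (ball_subset_ball (by linarith) hy)) hr ?_
    calc C * dist x y ≤ C * (r / (2 * C) + ρ) := by
          gcongr; linarith [dist_triangle x z y]
      _ = r / 2 + C * ρ := by field_simp
      _ < r := by linarith
  · have hxz' : dist x z ≤ r := hxz.trans_le (div_le_self hr.le (by linarith))
    have hκz : c / (4 * C) * r ≤ infDist z (frontier U) := by
      refine le_trans (le_of_eq ?_) (by linarith : 4 * ρ ≤ infDist z (frontier U))
      rw [hρ]; field_simp; norm_num
    exact (hbound hU hunb hh hr hz hxz' hκz y hy (mem_ball.1 hyx).le).trans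
      (mul_le_mul_of_nonneg_right (le_max_left _ _) (hh.pos z hz).le)
  · have hyz := mem_ball'.1 hy
    have hsub' : ball y (4 * ρ) ⊆ U :=
      (ball_subset_ball' (by linarith [dist_comm y z])).trans hsub
    have hharnack := harnack_of_dist_le hρ0 (hh.harmonicOnNhd.mono hsub')
      (fun w hw ↦ (hh.pos w (hsub' hw)).le) hyz.le
    rw [finrank_euclideanSpace_fin] at hharnack
    exact hharnack.trans (mul_le_mul_of_nonneg_right (le_max_right _ _)
      (hh.pos y (hsub (ball_subset_ball (by linarith) hy))).le)

theorem statement3_general (n : ℕ) {c C p : ℝ} (hc : 0 < c) (hc1 : c ≤ 1) (hC : 1 ≤ C)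
    (hp : 0 ≤ p) :
    ∃ D : ℝ, 0 < D ∧ ∀ {U : Set (En n)}, IsUniformDomain c C U → ¬ Bornology.IsBounded U →
      ∀ {h : En n → ℝ}, IsHarmonicProfile U h → ∀ {x : En n}, x ∈ U → ∀ {r : ℝ}, 0 < r →
        ∫ y in innerBall U x (2 * r), h y ^ p ≤ D * ∫ y in innerBall U x r, h y ^ p := by
  obtain ⟨B, hB, href⟩ := exists_reference_point n hc hc1 hC
  refine ⟨(B * B) ^ p * (32 * C / c) ^ n, by positivity,
    fun {U} hU hunb {h} hh {x} hx {r} hr ↦ ?_⟩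
  obtain ⟨z, hz, hball, hupper, hlower⟩ := href hU hunb hh hx hr
  have hz0 := hh.pos z hz
  have hnonneg : 0 ≤ᵐ[volume.restrict U] fun y ↦ h y ^ p :=
    ae_restrict_of_forall_mem hU.1.measurableSet fun y hy ↦ Real.rpow_nonneg (hh.pos y hy).le p
  have hsub := innerBall_subset_inter_ball U x
  calc ∫ y in innerBall U x (2 * r), h y ^ p
      ≤ (B * h z) ^ p / (h z / B) ^ p * (2 * r / (c * r / (16 * C))) ^ finrank ℝ (En n) *
        ∫ y in innerBall U x r, h y ^ p := by
        refine setIntegral_le_mul_setIntegral_of_ball_subset (by positivity) (by positivity)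
          (by positivity) (by positivity) (hsub (2 * r) |>.trans inter_subset_right) hball
          (fun y hy ↦ ?_) (fun y hy ↦ ?_)
          (ae_restrict_of_ae_restrict_of_subset (hsub r |>.trans inter_subset_left) hnonneg)
          ((hh.integrableOn_rpow_inter_ball hp x r).mono_set (hsub r))
        · have hy0 := (hh.pos y hy.1).le
          rw [Real.norm_of_nonneg (Real.rpow_nonneg hy0 p)]
          exact Real.rpow_le_rpow hy0 (hupper y (hsub _ hy)) hp
        · exact Real.rpow_le_rpow (by positivity) ((div_le_iff₀' hB).2 (hlower y hy)) hp
    _ = (B * B) ^ p * (32 * C / c) ^ n * ∫ y in innerBall U x r, h y ^ p := by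
        rw [← Real.div_rpow (by positivity) (by positivity), finrank_euclideanSpace_fin]
        congr 3 <;> field_simp
        norm_num

end Doubling

/-- Volume doubling for the measure `h² dλ` on inner balls of an unbounded uniform
domain, where `h` is a harmonic profile of the domain. -/
theorem statement3 (n : ℕ) (hn : 1 ≤ n) (cu Cu : ℝ)
    (hcu : cu ∈ Set.Ioo (0:ℝ) 1) (hCu : 1 < Cu) :
    ∃ D : ℝ, 0 < D ∧
      ∀ U : Set (En n), U ≠ Set.univ → (frontier U).Nonempty →
        ¬ Bornology.IsBounded U → IsUniformDomain cu Cu U →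
        ∀ h : En n → ℝ, ContinuousOn h (closure U) → (∀ z ∈ U, 0 < h z) →
          IsHarmonicOn h U → (∀ z ∈ frontier U, h z = 0) →
          ∀ x ∈ U, ∀ r : ℝ, 0 < r →
            ∫ y in {y | y ∈ U ∧ innerDist U x y < ENNReal.ofReal (2 * r)}, (h y)^2 ≤
              D * ∫ y in {y | y ∈ U ∧ innerDist U x y < ENNReal.ofReal r}, (h y)^2 := by
  obtain ⟨D, hD, hdoubling⟩ := statement3_general n hcu.1 hcu.2.le hCu.le zero_le_two
  refine ⟨D, hD, fun U _ _ hunb hU h hcont hpos hharm hzero x hx r hr ↦ ?_⟩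
  simpa only [Real.rpow_two, innerBall] using
    hdoubling hU hunb ⟨hcont, hpos, hharm.harmonicOnNhd hU.1, hzero⟩ hx hr
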